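/- Let G be a discrete polycyclic group and let T be an automorphism of G. Then Sub^c_G is closed in Sub_G, and the following statements are equivalent: (i) T acts distally on Sub^c_G; (ii) T acts distally on Sub^a_G; (iii) T acts distally on Sub_G; (iv) T^n = Id for some integer n ≥ 1. -/

import Mathlib

/-- The Chabauty topology on the space of subgroups of a discrete group `G`:
it is generated by the sub-basic sets `{H | H ∩ K = ∅}` for `K` finite (= compact in a
discrete group) and `{H | H ∩ U ≠ ∅}` for arbitrary `U` (= open in a discrete group). -/
instance chabautyTopology (G : Type*) [Group G] : TopologicalSpace (Subgroup G) :=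
  TopologicalSpace.generateFrom
    ({S | ∃ K : Set G, K.Finite ∧ S = {H : Subgroup G | (H : Set G) ∩ K = ∅}} ∪
     {S | ∃ U : Set G, S = {H : Subgroup G | ((H : Set G) ∩ U).Nonempty}})

/-- `Sub^c_G`: the set of cyclic subgroups of a (discrete) group `G`. -/
def cyclicSubgroups (G : Type*) [Group G] : Set (Subgroup G) :=
  {H : Subgroup G | ∃ x : G, H = Subgroup.zpowers x}

/-- `Sub^a_G`: the set of abelian subgroups of a (discrete) group `G`. -/
def abelianSubgroups (G : Type*) [Group G] : Set (Subgroup G) :=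
  {H : Subgroup G | ∀ a ∈ H, ∀ b ∈ H, a * b = b * a}

/-- The image of a subgroup under the `n`-th power (`n : ℤ`) of an automorphism. -/
def autMap {G : Type*} [Group G] (T : MulAut G) (n : ℤ) (H : Subgroup G) : Subgroup G :=
  Subgroup.map (T ^ n).toMonoidHom H

/-- The orbit of a pair of subgroups under the powers of an automorphism. -/
def orbitPairs {G : Type*} [Group G] (T : MulAut G) (A B : Subgroup G) :
    Set (Subgroup G × Subgroup G) :=
  Set.range fun n : ℤ => (autMap T n A, autMap T n B)

/-- The automorphism `T` acts distally on the (`T`-invariant) subset `Y` of `Sub_G`: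
for distinct `A, B ∈ Y`, the closure of the orbit of `(A, B)` does not meet
the diagonal of `Y`. -/
def ActsDistallyOn {G : Type*} [Group G] (T : MulAut G) (Y : Set (Subgroup G)) : Prop :=
  ∀ A ∈ Y, ∀ B ∈ Y, A ≠ B → ∀ C ∈ Y, (C, C) ∉ closure (orbitPairs T A B)

/-- The automorphism `T` acts expansively on the compact (`T`-invariant) subset `Y` of
`Sub_G`: there is a neighbourhood `W` of the diagonal (an entourage for the unique
uniformity of the compact Hausdorff space `Y`, equivalently `d < δ` for an expansivity
constant `δ` of a compatible metric `d`) such that any two distinct points of `Y` are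
separated outside of `W` by some power of `T`. -/
def ActsExpansivelyOn {G : Type*} [Group G] (T : MulAut G) (Y : Set (Subgroup G)) : Prop :=
  ∃ W : Set (Subgroup G × Subgroup G), IsOpen W ∧ (∀ A ∈ Y, (A, A) ∈ W) ∧
    ∀ A ∈ Y, ∀ B ∈ Y, A ≠ B → ∃ n : ℤ, (autMap T n A, autMap T n B) ∉ W

/-- An automorphism `T` of a discrete group `G` belongs to class (NC) if for every
nontrivial cyclic subgroup `A` of `G`, no sequence `T^{n_k}(A)` converges to the trivial
subgroup in the Chabauty topology. -/
def ClassNC {G : Type*} [Group G] (T : MulAut G) : Prop :=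
  ∀ A ∈ cyclicSubgroups G, A ≠ ⊥ →
    ∀ n : ℕ → ℤ, ¬ Filter.Tendsto (fun k => autMap T (n k) A) Filter.atTop (nhds ⊥)

/-- A group is polycyclic if it has a finite subnormal series with cyclic quotients. -/
def IsPolycyclic (G : Type*) [Group G] : Prop :=
  ∃ (k : ℕ) (s : Fin (k + 1) → Subgroup G),
    s 0 = ⊤ ∧ s (Fin.last k) = ⊥ ∧
    ∀ i : Fin k, s i.succ ≤ s i.castSucc ∧
      ∃ hn : ((s i.succ).subgroupOf (s i.castSucc)).Normal,
        haveI := hn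
        IsCyclic (↥(s i.castSucc) ⧸ (s i.succ).subgroupOf (s i.castSucc))

universe u

theorem poly_ind {G : Type u} [Group G] (hG : IsPolycyclic G) (P : Subgroup G → Prop)
    (h0 : P ⊥)
    (hs : ∀ N H : Subgroup G, N ≤ H → ∀ (Q : Type u) [Group Q] [IsCyclic Q] (f : H →* Q),
      (∀ y : H, f y = 1 ↔ (y : G) ∈ N) → P N → P H) : P ⊤ := by
  obtain ⟨k, s, hs0, hsl, hst⟩ := hG
  have key : ∀ i : Fin (k + 1), P (s i) := by
    intro i
    induction i using Fin.reverseInduction with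
    | last => rw [hsl]; exact h0
    | cast i ih =>
      obtain ⟨hle, hn, hc⟩ := hst i
      have := hn
      have := hc
      refine hs _ _ hle _ (QuotientGroup.mk' ((s i.succ).subgroupOf (s i.castSucc))) ?_ ih
      intro y
      rw [← MonoidHom.mem_ker, QuotientGroup.ker_mk', Subgroup.mem_subgroupOf]
  rw [← hs0]
  exact key 0

theorem poly_fg {G : Type u} [Group G] (hG : IsPolycyclic G) (K : Subgroup G) : K.FG := by
  have := poly_ind hG (fun H => ∀ K ≤ H, K.FG) ?_ ?_
  · exact this K le_top
  · intro K hK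
    rw [le_bot_iff.mp hK]
    exact ⟨∅, by simp⟩
  · intro N H hNH Q _ _ f hf ih K hK
    obtain ⟨S, hS⟩ := ih (K ⊓ N) inf_le_right
    let g : K →* Q := f.comp (Subgroup.inclusion hK)
    obtain ⟨⟨q, hq⟩, hgen⟩ := IsCyclic.exists_generator (α := g.range)
    obtain ⟨v, rfl⟩ := hq
    classical
    refine ⟨insert (v : G) S, le_antisymm ?_ ?_⟩
    · rw [Subgroup.closure_le]
      intro x hx
      rcases Finset.mem_insert.mp (Finset.mem_coe.mp hx) with rfl | hx
      · exact v.2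
      · have : x ∈ Subgroup.closure (S : Set G) := Subgroup.subset_closure hx
        rw [hS] at this
        exact this.1
    · intro x hx
      obtain ⟨j, hj⟩ := Subgroup.mem_zpowers_iff.mp (hgen ⟨g ⟨x, hx⟩, ⟨_, rfl⟩⟩)
      have hj' : g v ^ j = g ⟨x, hx⟩ := congrArg Subtype.val hj
      have h1 : g (v ^ (-j) * ⟨x, hx⟩) = 1 := by
        rw [map_mul, map_zpow, ← hj', zpow_neg, inv_mul_cancel]
      have h2 : (v : G) ^ (-j) * x ∈ K ⊓ N :=
        ⟨K.mul_mem (K.zpow_mem v.2 _) hx, (hf _).mp h1⟩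
      rw [← hS] at h2
      have h3 := Subgroup.closure_mono (k := ((insert (v : G) S : Finset G) : Set G))
        (by simp) h2
      have h4 : (v : G) ∈ Subgroup.closure ((insert (v : G) S : Finset G) : Set G) :=
        Subgroup.subset_closure (by simp)
      have := Subgroup.mul_mem _ (Subgroup.zpow_mem _ h4 j) h3
      simpa using this

theorem poly_roots {G : Type u} [Group G] (hG : IsPolycyclic G) (c : G)
    (hc : ¬ IsOfFinOrder c) : {m : ℤ | ∃ y : G, y ^ m = c}.Finite := by
  have := poly_ind hG (fun H => ∀ c ∈ H, ¬ IsOfFinOrder c →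
    {m : ℤ | ∃ y ∈ H, y ^ m = c}.Finite) ?_ ?_
  · simpa using this c trivial hc
  · intro c hc hc'
    rw [Subgroup.mem_bot.mp hc] at hc'
    exact absurd IsOfFinOrder.one hc'
  · intro N H hNH Q _ _ f hf ih c hcH hc
    rcases finite_or_infinite Q with hQ | hQ
    · have hr : 0 < Nat.card Q := Nat.card_pos
      have hmem : ∀ y ∈ H, y ^ Nat.card Q ∈ N := by
        intro y hy
        have := (hf (⟨y, hy⟩ ^ Nat.card Q)).mp (by rw [map_pow, pow_card_eq_one'])
        simpa using this
      refine (ih (c ^ Nat.card Q) (hmem c hcH) ?_).subset ?_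
      · rwa [isOfFinOrder_pow, not_or, and_iff_left hr.ne']
      · rintro m ⟨y, hy, rfl⟩
        refine ⟨y ^ Nat.card Q, hmem y hy, ?_⟩
        rw [← zpow_natCast, ← zpow_natCast, ← zpow_mul, ← zpow_mul, mul_comm]
    · let e : Q ≃* Multiplicative ℤ := (intCyclicMulEquiv (G := Q)).symm
      let d : H → ℤ := fun y => Multiplicative.toAdd (e (f y))
      have hd : ∀ (y : H) (m : ℤ), d (y ^ m) = m * d y := by
        intro y m
        simp [d, toAdd_zpow]
      have hdN : ∀ y : H, d y = 0 ↔ (y : G) ∈ N := by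
        intro y
        rw [← hf]
        simp [d]
      by_cases hcN : c ∈ N
      · refine (ih c hcN hc).subset ?_
        rintro m ⟨y, hy, hym⟩
        refine ⟨y, ?_, hym⟩
        have h0 : d (⟨y, hy⟩ ^ m) = 0 := (hdN _).mpr (by simpa [hym] using hcN)
        rw [hd] at h0
        rcases mul_eq_zero.mp h0 with h | h
        · subst h
          simp only [zpow_zero] at hym
          exact absurd (hym ▸ IsOfFinOrder.one) hc
        · exact (hdN _).mp h
      · have hne : d ⟨c, hcH⟩ ≠ 0 := fun h => hcN ((hdN _).mp h)
        refine (Set.finite_Icc (-|d ⟨c, hcH⟩|) |d ⟨c, hcH⟩|).subset ?_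
        rintro m ⟨y, hy, hym⟩
        have h1 : d ⟨c, hcH⟩ = m * d ⟨y, hy⟩ := by
          rw [← hd]; congr 1; exact Subtype.ext (by simpa using hym.symm)
        have h2 : m ∣ d ⟨c, hcH⟩ := ⟨_, h1⟩
        have h3 := Int.le_of_dvd (abs_pos.mpr hne) (by rwa [dvd_abs, abs_dvd] : |m| ∣ |d ⟨c, hcH⟩|)
        exact abs_le.mp h3

theorem isOpen_mem {G : Type u} [Group G] (x : G) : IsOpen {H : Subgroup G | x ∈ H} := by
  apply TopologicalSpace.isOpen_generateFrom_of_mem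
  refine Or.inr ⟨{x}, ?_⟩
  ext H
  simp

theorem isOpen_notMem {G : Type u} [Group G] (x : G) : IsOpen {H : Subgroup G | x ∉ H} := by
  apply TopologicalSpace.isOpen_generateFrom_of_mem
  refine Or.inl ⟨{x}, Set.finite_singleton x, ?_⟩
  ext H
  simp

theorem chabauty_t1 {G : Type u} [Group G] : T1Space (Subgroup G) := by
  rw [t1Space_iff_exists_open]
  intro A B hAB
  by_contra hcon
  push Not at hcon
  apply hAB
  ext x
  constructor
  · intro hx
    by_contra hB
    exact hB (hcon _ (isOpen_mem x) hx)
  · intro hx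
    by_contra hA
    exact hcon _ (isOpen_notMem x) hA hx

theorem cyclic_closed {G : Type u} [Group G] (hG : IsPolycyclic G) :
    IsClosed (cyclicSubgroups G) := by
  apply isClosed_of_closure_subset
  intro H hH
  obtain ⟨S, hS⟩ := poly_fg hG H
  have hopen : IsOpen (⋂ x ∈ S, {K : Subgroup G | x ∈ K}) :=
    isOpen_biInter_finset fun x _ => isOpen_mem x
  obtain ⟨K, hK, x, rfl⟩ := mem_closure_iff.mp hH _ hopen (by
    simp only [Set.mem_iInter]
    intro x hx
    change x ∈ H
    rw [← hS]
    exact Subgroup.subset_closure hx)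
  have hle : H ≤ Subgroup.zpowers x := by
    rw [← hS, Subgroup.closure_le]
    intro y hy
    simp only [Set.mem_iInter] at hK
    exact hK y hy
  have : IsCyclic H := isCyclic_of_injective (Subgroup.inclusion hle) (Subgroup.inclusion_injective hle)
  obtain ⟨g, hg⟩ := (Subgroup.isCyclic_iff_exists_zpowers_eq_top H).mp this
  exact ⟨g, hg.symm⟩

theorem mem_autMap {G : Type u} [Group G] (T : MulAut G) (n : ℤ) (H : Subgroup G) (x : G) :
    x ∈ autMap T n H ↔ ∃ z ∈ H, (T ^ n) z = x := by
  simp [autMap, Subgroup.mem_map]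

theorem autMap_inj {G : Type u} [Group G] (T : MulAut G) (n : ℤ) {A B : Subgroup G}
    (h : autMap T n A = autMap T n B) : A = B :=
  Subgroup.map_injective (f := (T ^ n).toMonoidHom) (T ^ n).injective h

theorem distal_mono {G : Type u} [Group G] {T : MulAut G} {Y Z : Set (Subgroup G)} (h : Y ⊆ Z)
    (hZ : ActsDistallyOn T Z) : ActsDistallyOn T Y :=
  fun A hA B hB hAB C hC => hZ A (h hA) B (h hB) hAB C (h hC)

theorem distal_of_finite {G : Type u} [Group G] (T : MulAut G) (n : ℕ) (hn : 0 < n)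
    (hT : T ^ n = 1) : ActsDistallyOn T (Set.univ : Set (Subgroup G)) := by
  intro A _ B _ hAB C _ hC
  have := chabauty_t1 (G := G)
  have hfin : (orbitPairs T A B).Finite := by
    refine ((Set.finite_Ico (0 : ℤ) n).image
      fun k : ℤ => (autMap T k A, autMap T k B)).subset ?_
    rintro _ ⟨k, rfl⟩
    have hn' : (n : ℤ) ≠ 0 := by exact_mod_cast hn.ne'
    refine ⟨k % n, ⟨Int.emod_nonneg _ hn', Int.emod_lt_of_pos _ (by exact_mod_cast hn)⟩, ?_⟩
    have : T ^ (k % n) = T ^ k := by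
      conv_rhs => rw [← Int.emod_add_mul_ediv k n, zpow_add, zpow_mul, zpow_natCast, hT, one_zpow,
        mul_one]
    simp only [autMap, this]
  rw [hfin.isClosed.closure_eq] at hC
  obtain ⟨k, hk⟩ := hC
  have h1 := congrArg Prod.fst hk
  have h2 := congrArg Prod.snd hk
  exact hAB (autMap_inj T k (h1.trans h2.symm))

/-- The subgroup of periodic points of `T`. -/
def perSub {G : Type u} [Group G] (T : MulAut G) : Subgroup G where
  carrier := {z | ∃ p : ℕ, 0 < p ∧ (T ^ p) z = z}
  one_mem' := ⟨1, one_pos, map_one _⟩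
  inv_mem' := by
    rintro z ⟨p, hp, h⟩
    exact ⟨p, hp, by rw [map_inv, h]⟩
  mul_mem' := by
    rintro a b ⟨p, hp, ha⟩ ⟨q, hq, hb⟩
    refine ⟨p * q, Nat.mul_pos hp hq, ?_⟩
    have h1 : ∀ n : ℕ, ((T ^ p) ^ n) a = a := by
      intro n
      induction n with
      | zero => simp
      | succ n ih => rw [pow_succ, MulAut.mul_apply, ha, ih]
    have h2 : ∀ n : ℕ, ((T ^ q) ^ n) b = b := by
      intro n
      induction n with
      | zero => simp
      | succ n ih => rw [pow_succ, MulAut.mul_apply, hb, ih]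
    rw [map_mul]
    congr 1
    · rw [pow_mul, h1]
    · rw [mul_comm, pow_mul, h2]

theorem fix_pow {G : Type u} [Group G] (S : MulAut G) {z : G} (h : S z = z) (n : ℕ) :
    (S ^ n) z = z := by
  induction n with
  | zero => simp
  | succ n ih => rw [pow_succ, MulAut.mul_apply, h, ih]

/-- Preimages of a non-exceptional element in a cyclic group range over a finite set. -/
theorem finite_pre {G : Type u} [Group G] (hG : IsPolycyclic G) (S : MulAut G) (x c : G)
    (hc : c ≠ 1) : {z : G | z ∈ Subgroup.zpowers x ∧ ∃ n : ℕ, (S ^ n) z = c}.Finite := by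
  by_cases hx : IsOfFinOrder x
  · exact (finite_zpowers.mpr hx).subset fun z hz => hz.1
  · by_cases hcf : IsOfFinOrder c
    · refine Set.finite_empty.subset ?_
      rintro z ⟨hz, n, rfl⟩
      exfalso
      obtain ⟨m, rfl⟩ := Subgroup.mem_zpowers_iff.mp hz
      have h1 : IsOfFinOrder (x ^ m) :=
        ((S ^ n).injective.isOfFinOrder_iff (f := (S ^ n).toMonoidHom)).mp hcf
      obtain ⟨k, hk, hk1⟩ := isOfFinOrder_iff_zpow_eq_one.mp h1
      rw [← zpow_mul] at hk1
      by_cases hm : m = 0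
      · subst hm; simp at hc
      · exact hx (isOfFinOrder_iff_zpow_eq_one.mpr ⟨m * k, mul_ne_zero hm hk, hk1⟩)
    · refine ((poly_roots hG c hcf).image fun m : ℤ => x ^ m).subset ?_
      rintro z ⟨hz, n, hn⟩
      obtain ⟨m, rfl⟩ := Subgroup.mem_zpowers_iff.mp hz
      exact ⟨m, ⟨(S ^ n) x, by rw [← map_zpow, hn]⟩, rfl⟩

theorem periodic_of_distal {G : Type u} [Group G] (hG : IsPolycyclic G) (T : MulAut G)
    (hT : ActsDistallyOn T (cyclicSubgroups G)) (x : G) : x ∈ perSub T := by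
  by_contra hx
  obtain ⟨y, hy⟩ : ∃ y : G, Subgroup.zpowers y = perSub T ⊓ Subgroup.zpowers x := by
    have hle : perSub T ⊓ Subgroup.zpowers x ≤ Subgroup.zpowers x := inf_le_right
    exact (Subgroup.isCyclic_iff_exists_zpowers_eq_top _).mp
      (isCyclic_of_injective (Subgroup.inclusion hle) (Subgroup.inclusion_injective hle))
  set C := Subgroup.zpowers y with hC
  have hyC : y ∈ C := Subgroup.mem_zpowers y
  obtain ⟨p, hp, hpy⟩ : y ∈ perSub T := (hy ▸ hyC : y ∈ perSub T ⊓ Subgroup.zpowers x).1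
  have hAC : Subgroup.zpowers x ≠ C := by
    intro h
    exact hx (hy ▸ h ▸ Subgroup.mem_zpowers x : x ∈ perSub T ⊓ Subgroup.zpowers x).1
  set S := T ^ p with hS
  have hSC : ∀ (n : ℕ), ∀ z ∈ C, (S ^ n) z = z := by
    intro n z hz
    obtain ⟨m, rfl⟩ := Subgroup.mem_zpowers_iff.mp hz
    rw [map_zpow, fix_pow S hpy]
  have hpow : ∀ n : ℕ, T ^ ((p * n : ℕ) : ℤ) = S ^ n := by
    intro n
    rw [zpow_natCast, pow_mul]
  apply hT _ ⟨x, rfl⟩ C ⟨y, rfl⟩ hAC C ⟨y, rfl⟩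
  have hC2 : ∀ n : ℕ, autMap T ((p * n : ℕ) : ℤ) C = C := by
    intro n
    ext z
    rw [mem_autMap, hpow]
    constructor
    · rintro ⟨w, hw, rfl⟩
      rwa [hSC n w hw]
    · intro hz
      exact ⟨z, hz, hSC n z hz⟩
  have htend : Filter.Tendsto (fun n : ℕ => autMap T ((p * n : ℕ) : ℤ) (Subgroup.zpowers x))
      Filter.atTop (nhds C) := by
    rw [TopologicalSpace.tendsto_nhds_generateFrom_iff]
    rintro s (⟨K, hK, rfl⟩ | ⟨U, rfl⟩) hCs
    · have : ∀ c ∈ K, ∀ᶠ n : ℕ in Filter.atTop,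
          c ∉ autMap T ((p * n : ℕ) : ℤ) (Subgroup.zpowers x) := by
        intro c hcK
        have hcC : c ∉ C := fun h => by
          have : c ∈ (C : Set G) ∩ K := ⟨h, hcK⟩
          rw [hCs] at this
          exact this
        by_contra hfreq
        have hinf : {n : ℕ | c ∈ autMap T ((p * n : ℕ) : ℤ) (Subgroup.zpowers x)}.Infinite := by
          rw [← Nat.frequently_atTop_iff_infinite]
          intro h
          exact hfreq h
        have hfin := finite_pre hG S x c (fun h => hcC (h ▸ C.one_mem))
        obtain ⟨n, hn, n', hn', hlt, heq⟩ := hinf.exists_lt_map_eq_of_mapsTo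
          (f := fun n : ℕ => (S ^ n).symm c) (fun n hn => by
            obtain ⟨z, hz, hzc⟩ := (mem_autMap _ _ _ _).mp hn
            rw [hpow] at hzc
            refine ⟨?_, n, (S ^ n).apply_symm_apply c⟩
            change (S ^ n).symm c ∈ _
            rw [← hzc, MulEquiv.symm_apply_apply]
            exact hz) hfin
        obtain ⟨z, hz, hzc⟩ := (mem_autMap _ _ _ _).mp hn
        rw [hpow] at hzc
        have hz1 : (S ^ n).symm c = z := by rw [← hzc, MulEquiv.symm_apply_apply]
        have hz2 : (S ^ n') z = c := by
          rw [← hz1, heq]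
          exact (S ^ n').apply_symm_apply c
        have hz3 : (S ^ (n' - n)) z = z := by
          apply (S ^ n).injective
          rw [← MulAut.mul_apply, ← pow_add, Nat.add_sub_cancel' hlt.le, hz2, hzc]
        have hzC : z ∈ C := by
          rw [hy]
          refine ⟨⟨p * (n' - n), Nat.mul_pos hp (Nat.sub_pos_of_lt hlt), ?_⟩, hz⟩
          rw [pow_mul]
          exact hz3
        apply hcC
        rw [← hzc, hSC n z hzC]
        exact hzC
      have hall := (Filter.eventually_all_finite hK).mpr this
      filter_upwards [hall] with n hn
      change _ ∩ K = ∅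
      ext c
      simp only [Set.mem_inter_iff, SetLike.mem_coe, Set.mem_empty_iff_false, iff_false, not_and]
      exact fun h1 h2 => hn c h2 h1
    · obtain ⟨c, hc, hcU⟩ := hCs
      refine Filter.Eventually.of_forall fun n => ⟨c, ?_, hcU⟩
      refine (mem_autMap _ _ _ _).mpr ⟨c, ?_, ?_⟩
      · have : c ∈ perSub T ⊓ Subgroup.zpowers x := hy ▸ hc
        exact this.2
      · rw [hpow, hSC n c hc]
  refine mem_closure_of_tendsto (f := fun n : ℕ => (autMap T ((p * n : ℕ) : ℤ) (Subgroup.zpowers x),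
    autMap T ((p * n : ℕ) : ℤ) C)) (b := Filter.atTop) ?_ (Filter.Eventually.of_forall fun n => ⟨_, rfl⟩)
  refine htend.prodMk_nhds ?_
  simp only [hC2]
  exact tendsto_const_nhds

theorem finite_order_of_distal {G : Type u} [Group G] (hG : IsPolycyclic G) (T : MulAut G)
    (hT : ActsDistallyOn T (cyclicSubgroups G)) : ∃ n : ℕ, 0 < n ∧ T ^ n = 1 := by
  obtain ⟨F, hF⟩ := poly_fg hG ⊤
  choose q hq hqz using fun x => (periodic_of_distal hG T hT x : ∃ p : ℕ, 0 < p ∧ (T ^ p) x = x)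
  refine ⟨∏ x ∈ F, q x, Finset.prod_pos fun x _ => hq x, ?_⟩
  have : (T ^ (∏ x ∈ F, q x)).toMonoidHom = MonoidHom.id G := by
    refine MonoidHom.eq_of_eqOn_dense hF ?_
    intro x hx
    obtain ⟨k, hk⟩ := Finset.dvd_prod_of_mem q (Finset.mem_coe.mp hx)
    change (T ^ (∏ x ∈ F, q x)) x = x
    rw [hk, pow_mul]
    exact fix_pow _ (hqz x) k
  ext x
  exact DFunLike.congr_fun this x

/-- for a discrete polycyclic group `G`, `Sub^c_G` is closed and the
distality of the `T`-action on `Sub^c_G`, `Sub^a_G`, `Sub_G` are all equivalent to `T`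
having finite order. -/
theorem polycyclic_distal_tfae {G : Type*} [Group G] (hG : IsPolycyclic G)
    (T : MulAut G) :
    IsClosed (cyclicSubgroups G) ∧
    List.TFAE [ActsDistallyOn T (cyclicSubgroups G),
      ActsDistallyOn T (abelianSubgroups G),
      ActsDistallyOn T (Set.univ : Set (Subgroup G)),
      ∃ n : ℕ, 0 < n ∧ T ^ n = 1] := by
  refine ⟨cyclic_closed hG, ?_⟩
  have hab : cyclicSubgroups G ⊆ abelianSubgroups G := by
    rintro _ ⟨x, rfl⟩ a ha b hb
    obtain ⟨i, rfl⟩ := Subgroup.mem_zpowers_iff.mp ha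
    obtain ⟨j, rfl⟩ := Subgroup.mem_zpowers_iff.mp hb
    rw [← zpow_add, ← zpow_add, add_comm]
  tfae_have 1 → 4 := finite_order_of_distal hG T
  tfae_have 4 → 3 := fun ⟨n, hn, h⟩ => distal_of_finite T n hn h
  tfae_have 3 → 2 := distal_mono (Set.subset_univ _)
  tfae_have 2 → 1 := distal_mono hab
  tfae_finish
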